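/- arXiv:1610.10090 — 9 statements merged into one kernel-verified Lean document; each statement's English description precedes it below -/
import Mathlib

section
/- Let N ≥ 3, let d ≥ 1, let k ∈ {1,…,N}, and let δ : {1,…,N−1} → {1,…,N} be the increasing bijection onto {1,…,N}∖{k}. Define the deleted surface-tension matrix σ'_{ij} = σ_{δ(i)δ(j)} (1 ≤ i,j ≤ N−1) and the corresponding (N−2)×(N−2) matrix Λ'_{ij} = (3/√2)·η·(σ'_{i,N−1} + σ'_{j,N−1} − σ'_{ij}). If v_1, …, v_N ∈ ℝ^d satisfy v_1 + ⋯ + v_N = 0 and v_k = 0, then Σ_{i,j=1}^{N−1} Λ_{ij} (v_i · v_j) = Σ_{i,j=1}^{N−2} Λ'_{ij} (v_{δ(i)} · v_{δ(j)}). (This is the algebraic core of the reduction consistency of the N-phase gradient free-energy term: if one fluid phase is absent, the N-phase mixing-energy quadratic form reduces to the (N−1)-phase one.) -/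
open Matrix

/-- The quadratic form equals minus the full symmetric sum. -/
theorem quad_form_full (m d : ℕ) (c : ℝ) (σ : Fin (m + 1) → Fin (m + 1) → ℝ)
    (hσsymm : ∀ i j, σ i j = σ j i) (hσdiag : ∀ i, σ i i = 0)
    (v : Fin (m + 1) → Fin d → ℝ) (hv : ∑ i, v i = 0) :
    (∑ i : Fin m, ∑ j : Fin m,
      (c * (σ i.castSucc (Fin.last m) + σ j.castSucc (Fin.last m) - σ i.castSucc j.castSucc))
        * (v i.castSucc ⬝ᵥ v j.castSucc))
      = - (c * ∑ i, ∑ j, σ i j * (v i ⬝ᵥ v j)) := by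
  have h1 : ∀ i, ∑ j, (v i ⬝ᵥ v j) = 0 := by
    intro i
    rw [← dotProduct_sum, hv, dotProduct_zero]
  have h2 : ∀ j, ∑ i, (v i ⬝ᵥ v j) = 0 := by
    intro j
    rw [← sum_dotProduct, hv, zero_dotProduct]
  have hfull : (∑ i, ∑ j, (c * (σ i (Fin.last m) + σ j (Fin.last m) - σ i j)) * (v i ⬝ᵥ v j))
      = - (c * ∑ i, ∑ j, σ i j * (v i ⬝ᵥ v j)) := by
    have e : ∀ i j, (c * (σ i (Fin.last m) + σ j (Fin.last m) - σ i j)) * (v i ⬝ᵥ v j)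
        = c * σ i (Fin.last m) * (v i ⬝ᵥ v j) + c * σ j (Fin.last m) * (v i ⬝ᵥ v j)
          - c * (σ i j * (v i ⬝ᵥ v j)) := by
      intro i j
      ring
    simp only [e, Finset.sum_sub_distrib, Finset.sum_add_distrib]
    have a1 : ∑ i, ∑ j, c * σ i (Fin.last m) * (v i ⬝ᵥ v j) = 0 := by
      simp only [← Finset.mul_sum, h1, mul_zero, Finset.sum_const_zero]
    have a2 : ∑ i, ∑ j, c * σ j (Fin.last m) * (v i ⬝ᵥ v j) = 0 := by
      rw [Finset.sum_comm]
      simp only [← Finset.mul_sum, h2, mul_zero, Finset.sum_const_zero]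
    rw [a1, a2]
    simp only [← Finset.mul_sum]
    ring
  rw [← hfull]
  simp only [Fin.sum_univ_castSucc, hσdiag, hσsymm (Fin.last m)]
  simp

/-- Reduction consistency of the gradient (mixing-energy) quadratic form:
if `v_1 + ⋯ + v_N = 0` and `v_k = 0`, then the N-phase quadratic form
`Σ_{i,j=1}^{N−1} Λ_{ij} (v_i · v_j)` equals the (N−1)-phase one
`Σ_{i,j=1}^{N−2} Λ'_{ij} (v_{δ(i)} · v_{δ(j)})`, where `δ` is the increasing bijection of
`{1,…,N−1}` onto `{1,…,N}∖{k}`, `σ'_{ij} = σ_{δ(i)δ(j)}`, and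
`Λ'_{ij} = (3/√2)·η·(σ'_{i,N−1} + σ'_{j,N−1} − σ'_{ij})`. -/
theorem stmt2 (N : ℕ) (hN : 3 ≤ N) (d : ℕ) (hd : 1 ≤ d) (η : ℝ) (hη : 0 < η)
    (σ : Fin N → Fin N → ℝ)
    (hσsymm : ∀ i j, σ i j = σ j i)
    (hσdiag : ∀ i, σ i i = 0)
    (k : Fin N)
    (δ : Fin (N - 1) → Fin N) (hδmono : StrictMono δ) (hδrange : Set.range δ = {k}ᶜ)
    (v : Fin N → Fin d → ℝ) (hv : ∑ i, v i = 0) (hvk : v k = 0) :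
    (∑ i : Fin (N - 1), ∑ j : Fin (N - 1),
        (3 / Real.sqrt 2 * η *
          (σ (Fin.castLE (N.sub_le 1) i) ⟨N - 1, by omega⟩
            + σ (Fin.castLE (N.sub_le 1) j) ⟨N - 1, by omega⟩
            - σ (Fin.castLE (N.sub_le 1) i) (Fin.castLE (N.sub_le 1) j)))
          * (v (Fin.castLE (N.sub_le 1) i) ⬝ᵥ v (Fin.castLE (N.sub_le 1) j)))
      = ∑ i : Fin (N - 2), ∑ j : Fin (N - 2),
          (3 / Real.sqrt 2 * η *
            (σ (δ (Fin.castLE (by omega) i)) (δ ⟨N - 2, by omega⟩)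
              + σ (δ (Fin.castLE (by omega) j)) (δ ⟨N - 2, by omega⟩)
              - σ (δ (Fin.castLE (by omega) i)) (δ (Fin.castLE (by omega) j))))
            * (v (δ (Fin.castLE (by omega) i)) ⬝ᵥ v (δ (Fin.castLE (by omega) j))) := by
  obtain ⟨m, rfl⟩ : ∃ m, N = m + 3 := ⟨N - 3, by omega⟩
  change Fin (m + 2) → Fin (m + 3) at δ
  have hne : ∀ i, δ i ≠ k := fun i => by
    have : δ i ∈ ({k}ᶜ : Set (Fin (m + 3))) := hδrange ▸ Set.mem_range_self i
    simpa using this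
  have key : ∀ {M : Type} [AddCommMonoid M] (f : Fin (m + 3) → M), f k = 0 →
      ∑ i, f i = ∑ i, f (δ i) := by
    intro M _ f hf
    symm
    refine Finset.sum_of_injOn δ hδmono.injective.injOn (by simp) ?_ (fun _ _ => rfl)
    intro i _ hi
    have hik : i = k := by
      by_contra h
      apply hi
      have : i ∈ Set.range δ := by
        rw [hδrange]
        simpa using h
      simpa using this
    rw [hik, hf]
  have L := quad_form_full (m + 2) d (3 / Real.sqrt 2 * η) σ hσsymm hσdiag v hv
  have R := quad_form_full (m + 1) d (3 / Real.sqrt 2 * η) (fun i j => σ (δ i) (δ j))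
    (fun _ _ => hσsymm _ _) (fun _ => hσdiag _) (fun i => v (δ i))
    (by rw [← key v hvk]; exact hv)
  refine Eq.trans L (Eq.trans ?_ R.symm)
  rw [key (fun i => ∑ j, σ i j * (v i ⬝ᵥ v j)) (by simp [hvk])]
  congr 2
  refine Finset.sum_congr rfl fun i _ => ?_
  exact key (fun j => σ (δ i) j * (v (δ i) ⬝ᵥ v j)) (by simp [hvk])
end

section
/- Let N ≥ 2. The (N−1)×(N−1) matrix Λ is positive definite if and only if −Σ_{i,j=1}^{N} σ_{ij} x_i x_j > 0 for every nonzero x ∈ ℝ^N with x_1 + ⋯ + x_N = 0. -/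
open Matrix

lemma key_identity (M : ℕ) (c : ℝ) (σ : Fin (M+1) → Fin (M+1) → ℝ)
    (hs : ∀ i j, σ i j = σ j i) (hd : ∀ i, σ i i = 0)
    (L : Matrix (Fin M) (Fin M) ℝ)
    (hL : ∀ i j, L i j = c * (σ i.castSucc (Fin.last M) + σ j.castSucc (Fin.last M)
      - σ i.castSucc j.castSucc)) (x : Fin (M+1) → ℝ) (hx : ∑ i, x i = 0) :
    star (fun i : Fin M => x i.castSucc) ⬝ᵥ (L *ᵥ (fun i : Fin M => x i.castSucc))
      = c * (-∑ i, ∑ j, σ i j * x i * x j) := by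
  rw [Fin.sum_univ_castSucc] at hx
  have hl : x (Fin.last M) = -∑ i : Fin M, x i.castSucc := by linarith
  have h1 : star (fun i : Fin M => x i.castSucc) ⬝ᵥ (L *ᵥ (fun i : Fin M => x i.castSucc))
      = c * (2 * ((∑ i : Fin M, σ i.castSucc (Fin.last M) * x i.castSucc)
          * ∑ i : Fin M, x i.castSucc)
        - ∑ i : Fin M, ∑ j : Fin M, σ i.castSucc j.castSucc * x i.castSucc * x j.castSucc) := by
    have e : star (fun i : Fin M => x i.castSucc) ⬝ᵥ (L *ᵥ (fun i : Fin M => x i.castSucc))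
        = ∑ i : Fin M, ∑ j : Fin M, c * ((σ i.castSucc (Fin.last M) * x i.castSucc) * x j.castSucc
          + x i.castSucc * (σ j.castSucc (Fin.last M) * x j.castSucc)
          - σ i.castSucc j.castSucc * x i.castSucc * x j.castSucc) := by
      simp only [dotProduct, mulVec, Finset.mul_sum, Pi.star_apply, star_trivial, hL]
      refine Finset.sum_congr rfl fun i _ => Finset.sum_congr rfl fun j _ => ?_
      ring
    rw [e]
    simp only [← Finset.mul_sum, Finset.sum_sub_distrib, Finset.sum_add_distrib, ← Finset.sum_mul]
    ring
  have h2 : ∑ i, ∑ j, σ i j * x i * x j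
      = (∑ i : Fin M, ∑ j : Fin M, σ i.castSucc j.castSucc * x i.castSucc * x j.castSucc)
        + 2 * ((∑ i : Fin M, σ i.castSucc (Fin.last M) * x i.castSucc) * x (Fin.last M)) := by
    have e : ∑ j : Fin M, σ (Fin.last M) j.castSucc * x (Fin.last M) * x j.castSucc
        = (∑ i : Fin M, σ i.castSucc (Fin.last M) * x i.castSucc) * x (Fin.last M) := by
      rw [Finset.sum_mul]
      refine Finset.sum_congr rfl fun j _ => ?_
      rw [hs]
      ring
    simp only [Fin.sum_univ_castSucc, Finset.sum_add_distrib, hd, e, ← Finset.sum_mul]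
    ring
  rw [h1, h2, hl]
  ring

/-- The matrix `Λ` with `Λ_{ij} = (3/√2)·η·(σ_{iN} + σ_{jN} − σ_{ij})` is
positive definite if and only if `−Σ_{i,j=1}^{N} σ_{ij} x_i x_j > 0` for every nonzero
`x ∈ ℝ^N` with `x_1 + ⋯ + x_N = 0`. -/
theorem stmt3 (N : ℕ) (hN : 2 ≤ N) (η : ℝ) (hη : 0 < η)
    (σ : Fin N → Fin N → ℝ)
    (hσsymm : ∀ i j, σ i j = σ j i)
    (hσdiag : ∀ i, σ i i = 0)
    (Λ : Matrix (Fin (N - 1)) (Fin (N - 1)) ℝ)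
    (hΛ : ∀ i j, Λ i j = 3 / Real.sqrt 2 * η *
      (σ (Fin.castLE (N.sub_le 1) i) ⟨N - 1, by omega⟩
        + σ (Fin.castLE (N.sub_le 1) j) ⟨N - 1, by omega⟩
        - σ (Fin.castLE (N.sub_le 1) i) (Fin.castLE (N.sub_le 1) j))) :
    Λ.PosDef ↔
      ∀ x : Fin N → ℝ, x ≠ 0 → (∑ i, x i) = 0 →
        0 < -∑ i : Fin N, ∑ j : Fin N, σ i j * x i * x j := by
  obtain ⟨M, rfl⟩ : ∃ M, N = M + 1 := ⟨N - 1, by omega⟩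
  have hc : 0 < 3 / Real.sqrt 2 * η := by positivity
  change Matrix (Fin M) (Fin M) ℝ at Λ
  have hL : ∀ i j : Fin M, Λ i j = 3 / Real.sqrt 2 * η *
      (σ i.castSucc (Fin.last M) + σ j.castSucc (Fin.last M)
      - σ i.castSucc j.castSucc) := fun i j => hΛ i j
  have key := key_identity M _ σ hσsymm hσdiag Λ hL
  change Matrix.PosDef (n := Fin M) Λ ↔ _
  rw [Matrix.posDef_iff_dotProduct_mulVec]
  constructor
  · rintro ⟨-, h⟩ x hx0 hx
    have hy : (fun i : Fin M => x i.castSucc) ≠ 0 := by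
      intro h0
      apply hx0
      have h0' : ∀ i : Fin M, x i.castSucc = 0 := fun i => congrFun h0 i
      funext i
      refine Fin.lastCases ?_ h0' i
      rw [Fin.sum_univ_castSucc] at hx
      simpa [h0'] using hx
    have := h hy
    rw [key x hx] at this
    exact pos_of_mul_pos_right this hc.le
  · intro h
    refine ⟨?_, ?_⟩
    · ext i j
      simp only [Matrix.conjTranspose_apply, star_trivial, hL]
      rw [hσsymm j.castSucc i.castSucc]
      ring
    · intro y hy
      let x : Fin (M+1) → ℝ := Fin.snoc (α := fun _ => ℝ) y (-∑ i, y i)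
      have hxy : (fun i : Fin M => x i.castSucc) = y := by
        funext i
        simp [x]
      have hx : ∑ i, x i = 0 := by
        rw [Fin.sum_univ_castSucc]
        simp [x]
      have hx0 : x ≠ 0 := by
        intro h0
        apply hy
        rw [← hxy, h0]
        rfl
      have := key x hx
      rw [hxy] at this
      rw [this]
      exact mul_pos hc (h x hx0 hx)
end

section
/- Let N ≥ 2 and let ρ̃_1, …, ρ̃_N be positive reals; set γ̃_i = 1/ρ̃_i and Γ = Σ_{i=1}^{N} γ̃_i. Define the (N−1)×(N−1) matrices Z with entries e_{ij} = γ̃_i δ_{ij} − γ̃_i γ̃_j / Γ and Λ₁ with entries a_{ij} = ρ̃_i δ_{ij} + ρ̃_N (1 ≤ i,j ≤ N−1, δ_{ij} the Kronecker delta). Then Z·Λ₁ = I and Λ₁·Z = I; in particular Z is invertible with Z⁻¹ = Λ₁. -/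
open Matrix

theorem stmt4_aux (n : ℕ) (p g : Fin n → ℝ) (r Γ : ℝ) (hpg : ∀ i, g i * p i = 1)
    (hr : r ≠ 0) (hΓ0 : Γ ≠ 0) (hΓ : Γ = ∑ i, g i + r⁻¹)
    (Z L : Matrix (Fin n) (Fin n) ℝ)
    (hZ : ∀ i j, Z i j = (if i = j then g i else 0) - g i * g j / Γ)
    (hL : ∀ i j, L i j = (if i = j then p i else 0) + r) : Z * L = 1 := by
  ext i j
  have hS : ∑ k, g k = Γ - r⁻¹ := by rw [hΓ]; ring
  have key : ∀ k, Z i k * L k j =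
      (if i = k then g i * ((if k = j then p k else 0) + r) else 0)
        - (if k = j then g i / Γ * (g k * p k) else 0) - g i * r / Γ * g k := by
    intro k
    rw [hZ, hL]
    split_ifs <;> ring
  rw [Matrix.mul_apply, Finset.sum_congr rfl (fun k _ => key k), Finset.sum_sub_distrib,
    Finset.sum_sub_distrib, ← Finset.mul_sum, hS, Finset.sum_ite_eq, Finset.sum_ite_eq',
    Matrix.one_apply]
  simp only [Finset.mem_univ, if_true, hpg]
  have h := hpg i
  split_ifs
  · rw [mul_add, h]; field_simp; ring
  · field_simp; ring

/-- With `γ̃_i = 1/ρ̃_i`, `Γ = Σ γ̃_i`, `Z` with entries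
`e_{ij} = γ̃_i δ_{ij} − γ̃_i γ̃_j / Γ` and `Λ₁` with entries `a_{ij} = ρ̃_i δ_{ij} + ρ̃_N`,
one has `Z·Λ₁ = I` and `Λ₁·Z = I`; in particular `Z` is invertible with `Z⁻¹ = Λ₁`. -/
theorem stmt4 (N : ℕ) (hN : 2 ≤ N)
    (ρ : Fin N → ℝ) (hρ : ∀ i, 0 < ρ i)
    (γ : Fin N → ℝ) (hγ : ∀ i, γ i = (ρ i)⁻¹)
    (Γ : ℝ) (hΓ : Γ = ∑ i, γ i)
    (Z Λ₁ : Matrix (Fin (N - 1)) (Fin (N - 1)) ℝ)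
    (hZ : ∀ i j, Z i j =
      (if i = j then γ (Fin.castLE (N.sub_le 1) i) else 0)
        - γ (Fin.castLE (N.sub_le 1) i) * γ (Fin.castLE (N.sub_le 1) j) / Γ)
    (hΛ₁ : ∀ i j, Λ₁ i j =
      (if i = j then ρ (Fin.castLE (N.sub_le 1) i) else 0) + ρ ⟨N - 1, by omega⟩) :
    Z * Λ₁ = 1 ∧ Λ₁ * Z = 1 ∧ IsUnit Z ∧ Z⁻¹ = Λ₁ := by
  have h1 : Z * Λ₁ = 1 := by
    obtain ⟨n, rfl⟩ : ∃ n, N = n + 1 := ⟨N - 1, by omega⟩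
    have hγ0 : ∀ i, 0 < γ i := fun i => by rw [hγ]; exact inv_pos.mpr (hρ i)
    refine stmt4_aux n (fun i => ρ i.castSucc) (fun i => γ i.castSucc) (ρ (Fin.last n)) Γ
      (fun i => ?_) (hρ _).ne' ?_ ?_ Z Λ₁ hZ hΛ₁
    · simp only [hγ]
      exact inv_mul_cancel₀ (hρ _).ne'
    · rw [hΓ]
      exact (Finset.sum_pos (fun i _ => hγ0 i) ⟨0, Finset.mem_univ _⟩).ne'
    · rw [hΓ, Fin.sum_univ_castSucc, hγ (Fin.last n)]
  have h2 : Λ₁ * Z = 1 := mul_eq_one_comm.mp h1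
  exact ⟨h1, h2, IsUnit.of_mul_eq_one _ h1, Matrix.inv_eq_right_inv h1⟩
end

section
/- Let N ≥ 2 and 1 ≤ k < l ≤ N. If c ∈ ℝ^N satisfies c_1 + ⋯ + c_N = 1 and c_i = 0 for all i ∉ {k, l}, then H(c) = β·σ_{kl}·c_k²·(1 − c_k)². (Verification of assumption (𝒜2): when only fluids k and l are present, the N-phase potential free energy density reduces to the two-phase one.) -/
/-- assumption (𝒜2): If `c_1 + ⋯ + c_N = 1` and `c_i = 0` for all
`i ∉ {k, l}` (`k < l`), then the N-phase potential free energy density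
`H(c) = (β/2)·Σ_{i,j} (σ_{ij}/2)·[f(c_i) + f(c_j) − f(c_i + c_j)]` with
`f(c) = c²(1−c)²` reduces to `β·σ_{kl}·c_k²·(1 − c_k)²`. -/
theorem stmt9 (N : ℕ) (hN : 2 ≤ N) (η : ℝ) (hη : 0 < η)
    (β : ℝ) (hβ : β = 6 / Real.sqrt 2 / η)
    (σ : Fin N → Fin N → ℝ)
    (hσsymm : ∀ i j, σ i j = σ j i)
    (hσdiag : ∀ i, σ i i = 0)
    (f : ℝ → ℝ) (hf : ∀ x, f x = x ^ 2 * (1 - x) ^ 2)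
    (k l : Fin N) (hkl : k < l)
    (c : Fin N → ℝ) (hsum : ∑ i, c i = 1)
    (hzero : ∀ i, i ≠ k → i ≠ l → c i = 0) :
    β / 2 * ∑ i : Fin N, ∑ j : Fin N, σ i j / 2 * (f (c i) + f (c j) - f (c i + c j))
      = β * σ k l * (c k ^ 2 * (1 - c k) ^ 2) := by
  have hne : k ≠ l := ne_of_lt hkl
  have hs : c k + c l = 1 := by
    rw [← hsum]
    exact (Fintype.sum_eq_add k l hne (fun x hx => hzero x hx.1 hx.2)).symm
  have hl : c l = 1 - c k := by linarith
  have h1 : ∀ i j, c i = 0 → σ i j / 2 * (f (c i) + f (c j) - f (c i + c j)) = 0 := by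
    intro i j h
    simp [hf, h]
  have h2 : ∀ i j, c j = 0 → σ i j / 2 * (f (c i) + f (c j) - f (c i + c j)) = 0 := by
    intro i j h
    simp [hf, h]
  have h3 : ∀ i, ∑ j : Fin N, σ i j / 2 * (f (c i) + f (c j) - f (c i + c j))
      = σ i k / 2 * (f (c i) + f (c k) - f (c i + c k))
        + σ i l / 2 * (f (c i) + f (c l) - f (c i + c l)) := fun i =>
    Fintype.sum_eq_add k l hne (fun x hx => h2 i x (hzero x hx.1 hx.2))
  rw [Fintype.sum_eq_add k l hne
    (fun x hx => Finset.sum_eq_zero (fun j _ => h1 x j (hzero x hx.1 hx.2))), h3, h3,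
    hσdiag, hσdiag, hσsymm l k, hl]
  simp only [hf]
  ring
end

section
/- Let N ≥ 3, let k ∈ {1,…,N}, and let δ : {1,…,N−1} → {1,…,N} be the increasing bijection onto {1,…,N}∖{k}. Define σ'_{ij} = σ_{δ(i)δ(j)} and let H' be the (N−1)-phase potential free energy density built from σ' (with the same β). If c ∈ ℝ^N satisfies c_k = 0, then H(c₁,…,c_N) = H'(c_{δ(1)},…,c_{δ(N−1)}). (Verification of assumption (𝒜1): the potential free energy density satisfies the reduction consistency property (𝒞2) when one fluid phase is absent.) -/
/-- assumption (𝒜1), consistency (𝒞2): If fluid `k` is absent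
(`c_k = 0`) and `δ` is the increasing bijection of `{1,…,N−1}` onto `{1,…,N}∖{k}`,
then the N-phase potential free energy density built from `σ` evaluated at `c`
equals the (N−1)-phase one built from `σ'_{ij} = σ_{δ(i)δ(j)}` evaluated at
`(c_{δ(1)},…,c_{δ(N−1)})`. -/
theorem stmt10 (N : ℕ) (hN : 3 ≤ N) (η : ℝ) (hη : 0 < η)
    (β : ℝ) (hβ : β = 6 / Real.sqrt 2 / η)
    (σ : Fin N → Fin N → ℝ)
    (hσsymm : ∀ i j, σ i j = σ j i)
    (hσdiag : ∀ i, σ i i = 0)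
    (f : ℝ → ℝ) (hf : ∀ x, f x = x ^ 2 * (1 - x) ^ 2)
    (k : Fin N)
    (δ : Fin (N - 1) → Fin N) (hδmono : StrictMono δ) (hδrange : Set.range δ = {k}ᶜ)
    (c : Fin N → ℝ) (hck : c k = 0) :
    β / 2 * ∑ i : Fin N, ∑ j : Fin N, σ i j / 2 * (f (c i) + f (c j) - f (c i + c j))
      = β / 2 * ∑ i : Fin (N - 1), ∑ j : Fin (N - 1),
          σ (δ i) (δ j) / 2 * (f (c (δ i)) + f (c (δ j)) - f (c (δ i) + c (δ j))) := by
  have f0 : f 0 = 0 := by simp [hf]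
  have key : ∀ g : Fin N → ℝ, g k = 0 → ∑ i, g i = ∑ i, g (δ i) := by
    intro g hg
    symm
    refine Fintype.sum_of_injective δ hδmono.injective _ _ ?_ (fun _ => rfl)
    intro i hi
    rw [hδrange] at hi
    have : i = k := by simpa using hi
    rw [this, hg]
  congr 1
  rw [key _ (by simp [hck, f0])]
  refine Finset.sum_congr rfl fun i _ => ?_
  exact key (fun j => σ (δ i) j / 2 * (f (c (δ i)) + f (c j) - f (c (δ i) + c j)))
    (by simp [hck, f0])
end

section
/- Let N ≥ 2 and assume the (N−1)×(N−1) matrix Λ is invertible with Θ = Λ⁻¹. Define Ĥ : ℝ^{N−1} → ℝ by Ĥ(c₁,…,c_{N−1}) = H(c₁,…,c_{N−1}, 1 − Σ_{i=1}^{N−1} c_i), and for c ∈ ℝ^{N−1} define L_i(c) = Σ_{j=1}^{N−1} Θ_{ij} ∂Ĥ/∂c_j(c) for 1 ≤ i ≤ N−1. Fix 1 ≤ k < l ≤ N and let c ∈ ℝ^{N−1} satisfy c_i = 0 for all i ≤ N−1 with i ∉ {k,l}, and, in case l ≤ N−1, c_l = 1 − c_k. Then: (i) L_i(c) = 0 for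 every i ≤ N−1 with i ∉ {k,l}; (ii) L_k(c) = (1/η²)·2c_k(1−c_k)(1−2c_k); (iii) if l ≤ N−1 then L_l(c) = −(1/η²)·2c_k(1−c_k)(1−2c_k). (Theorem 3: when only the pair of fluids k and l is present, the chemical-potential terms of the N-phase phase field equations reduce exactly to those of the corresponding two-phase system.) -/
open Matrix

/-- chain rule for the double sum -/
lemma stmt11_sym {ι : Type*} [Fintype ι] (σ : ι → ι → ℝ) (hs : ∀ i j, σ i j = σ j i)
    (g : ℝ → ℝ) (C d : ι → ℝ) :
    ∑ i, ∑ j, σ i j / 2 * (g (C i) * d i + g (C j) * d j - g (C i + C j) * (d i + d j))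
      = ∑ i, d i * ∑ j, σ i j * (g (C i) - g (C i + C j)) := by
  have h1 : ∑ i, ∑ j, σ i j / 2 * (g (C i) * d i + g (C j) * d j - g (C i + C j) * (d i + d j))
      = ∑ i, ∑ j, σ i j / 2 * (g (C i) - g (C i + C j)) * d i
        + ∑ i, ∑ j, σ i j / 2 * (g (C j) - g (C i + C j)) * d j := by
    simp only [← Finset.sum_add_distrib]
    refine Finset.sum_congr rfl fun i _ => Finset.sum_congr rfl fun j _ => ?_
    ring
  rw [h1, Finset.sum_comm (f := fun i j => σ i j / 2 * (g (C j) - g (C i + C j)) * d j)]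
  simp only [← Finset.sum_add_distrib, Finset.mul_sum]
  refine Finset.sum_congr rfl fun i _ => Finset.sum_congr rfl fun j _ => ?_
  rw [hs j i, add_comm (C j) (C i)]
  ring

/-- evaluation at a two-phase state -/
lemma stmt11_eval {ι : Type*} [Fintype ι] [DecidableEq ι] (σ : ι → ι → ℝ)
    (hs : ∀ i j, σ i j = σ j i) (hd : ∀ i, σ i i = 0)
    (g : ℝ → ℝ) (hg : ∀ x, g x = 2 * x * (1 - x) * (1 - 2 * x)) (C : ι → ℝ) (k l : ι)
    (hkl : k ≠ l) (hl : C l = 1 - C k) (h0 : ∀ i, i ≠ k → i ≠ l → C i = 0) (i : ι) :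
    ∑ j, σ i j * (g (C i) - g (C i + C j)) = g (C k) * (σ i l - σ i k) := by
  have : ∀ j, σ i j * (g (C i) - g (C i + C j))
      = (if j = l then g (C k) * σ i j else 0) - (if j = k then g (C k) * σ i j else 0) := by
    intro j
    by_cases hij : i = j
    · subst hij; simp [hd]
    by_cases hjl : j = l
    · subst hjl
      by_cases hik : i = k
      · subst hik; simp [hij, Ne.symm hkl, hl, hg]; ring
      · simp [Ne.symm hkl, hl, hg, h0 i hik hij]; ring
    by_cases hjk : j = k
    · subst hjk
      by_cases hil : i = l
      · subst hil; simp [hkl, hl, hg]; ring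
      · simp [hkl, hg, h0 i hij hil]; ring
    · simp [hjl, hjk, h0 j hjk hjl]
  simp only [this, Finset.sum_sub_distrib]
  simp
  ring

/-- Theorem 3, chemical-potential part: with `Θ = Λ⁻¹`,
`Ĥ(c₁,…,c_{N−1}) = H(c₁,…,c_{N−1}, 1 − Σ c_i)` and
`L_i(c) = Σ_j Θ_{ij} ∂Ĥ/∂c_j(c)`, if only the pair of fluids `k < l` is present
(`c_i = 0` for `i ∉ {k,l}`, and `c_l = 1 − c_k` when `l ≤ N−1`), then
`L_i(c) = 0` for `i ∉ {k,l}`, `L_k(c) = (1/η²)·2c_k(1−c_k)(1−2c_k)`, and (if `l ≤ N−1`)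
`L_l(c) = −(1/η²)·2c_k(1−c_k)(1−2c_k)`. -/
theorem stmt11 (N : ℕ) (hN : 2 ≤ N) (η : ℝ) (hη : 0 < η)
    (β : ℝ) (hβ : β = 6 / Real.sqrt 2 / η)
    (σ : Fin N → Fin N → ℝ)
    (hσsymm : ∀ i j, σ i j = σ j i)
    (hσdiag : ∀ i, σ i i = 0)
    (Λ : Matrix (Fin (N - 1)) (Fin (N - 1)) ℝ)
    (hΛdef : ∀ i j, Λ i j = 3 / Real.sqrt 2 * η *
      (σ (Fin.castLE (N.sub_le 1) i) ⟨N - 1, by omega⟩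
        + σ (Fin.castLE (N.sub_le 1) j) ⟨N - 1, by omega⟩
        - σ (Fin.castLE (N.sub_le 1) i) (Fin.castLE (N.sub_le 1) j)))
    (hΛinv : IsUnit Λ.det)
    (Θ : Matrix (Fin (N - 1)) (Fin (N - 1)) ℝ) (hΘ : Θ = Λ⁻¹)
    (f : ℝ → ℝ) (hf : ∀ x, f x = x ^ 2 * (1 - x) ^ 2)
    -- `cf c` is the full vector of volume fractions `(c₁,…,c_{N−1}, 1 − Σ c_i)`
    (cf : (Fin (N - 1) → ℝ) → Fin N → ℝ)
    (hcf : ∀ (c : Fin (N - 1) → ℝ) (i : Fin N),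
      cf c i = if h : (i : ℕ) < N - 1 then c ⟨i, h⟩ else 1 - ∑ m, c m)
    (Hhat : (Fin (N - 1) → ℝ) → ℝ)
    (hHhat : ∀ c : Fin (N - 1) → ℝ, Hhat c =
      β / 2 * ∑ i : Fin N, ∑ j : Fin N,
        σ i j / 2 * (f (cf c i) + f (cf c j) - f (cf c i + cf c j)))
    (L : Fin (N - 1) → (Fin (N - 1) → ℝ) → ℝ)
    (hL : ∀ (i : Fin (N - 1)) (c : Fin (N - 1) → ℝ),
      L i c = ∑ j : Fin (N - 1), Θ i j * fderiv ℝ Hhat c (Pi.single j (1 : ℝ)))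
    (k : Fin (N - 1)) (l : Fin N) (hkl : (k : ℕ) < (l : ℕ))
    (c : Fin (N - 1) → ℝ)
    (hzero : ∀ i : Fin (N - 1), (i : ℕ) ≠ (k : ℕ) → (i : ℕ) ≠ (l : ℕ) → c i = 0)
    (hcl : ∀ h : (l : ℕ) < N - 1, c ⟨l, h⟩ = 1 - c k) :
    (∀ i : Fin (N - 1), (i : ℕ) ≠ (k : ℕ) → (i : ℕ) ≠ (l : ℕ) → L i c = 0)
    ∧ L k c = 1 / η ^ 2 * (2 * c k * (1 - c k) * (1 - 2 * c k))
    ∧ ∀ h : (l : ℕ) < N - 1,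
        L ⟨l, h⟩ c = -(1 / η ^ 2) * (2 * c k * (1 - c k) * (1 - 2 * c k)) := by
  have hlast : N - 1 < N := by omega
  set e : Fin (N - 1) → Fin N := Fin.castLE (N.sub_le 1) with he
  set z : Fin N := ⟨N - 1, hlast⟩ with hz
  obtain ⟨g, hg⟩ : ∃ g : ℝ → ℝ, ∀ x, g x = 2 * x * (1 - x) * (1 - 2 * x) := ⟨_, fun _ => rfl⟩
  have hfd : ∀ x, HasDerivAt f (g x) x := by
    intro x
    have hfe : f = fun x => x ^ 2 * (1 - x) ^ 2 := funext hf
    rw [hfe]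
    have h1 : HasDerivAt (fun x : ℝ => 1 - x) (-1) x := by
      simpa using (hasDerivAt_id x).const_sub 1
    have := ((hasDerivAt_id x).fun_pow 2).fun_mul (h1.fun_pow 2)
    refine this.congr_deriv ?_
    rw [hg]; simp; ring
  have hcfd : ∀ i : Fin N, ∃ A : (Fin (N - 1) → ℝ) →L[ℝ] ℝ,
      HasFDerivAt (fun c => cf c i) A c ∧
      ∀ j, A (Pi.single j 1) = (if i = e j then 1 else 0) - (if i = z then 1 else 0) := by
    intro i
    by_cases h : (i : ℕ) < N - 1
    · refine ⟨ContinuousLinearMap.proj ⟨i, h⟩, ?_, ?_⟩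
      · have : (fun c => cf c i) = fun c : Fin (N - 1) → ℝ => c ⟨i, h⟩ := by
          funext c; simp [hcf, h]
        rw [this]
        exact hasFDerivAt_apply _ _
      · intro j
        have h2 : i ≠ z := by
          intro h3; rw [h3] at h; simp [hz] at h
        simp [Pi.single_apply, h2, he, Fin.ext_iff]
    · refine ⟨-∑ m, ContinuousLinearMap.proj m, ?_, ?_⟩
      · have : (fun c => cf c i) = fun c : Fin (N - 1) → ℝ => 1 - ∑ m, c m := by
          funext c; simp [hcf, h]
        rw [this]
        exact (HasFDerivAt.fun_sum fun m _ => hasFDerivAt_apply m c).const_sub 1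
      · intro j
        have h2 : i = z := by
          apply Fin.ext; simp only [hz]; omega
        have h3 : i ≠ e j := by
          intro h3; apply h; rw [h3]; simp [he]
        rw [if_neg h3, if_pos h2]
        simp [Pi.single_apply]
  choose A hA hAs using hcfd
  have hHd : HasFDerivAt Hhat ((β / 2) • ∑ i, ∑ j, (σ i j / 2) •
      (g (cf c i) • A i + g (cf c j) • A j - g (cf c i + cf c j) • (A i + A j))) c := by
    have hHe : Hhat = fun c => β / 2 * ∑ i : Fin N, ∑ j : Fin N,
        σ i j / 2 * (f (cf c i) + f (cf c j) - f (cf c i + cf c j)) := funext hHhat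
    rw [hHe]
    refine HasFDerivAt.const_mul (HasFDerivAt.fun_sum fun i _ => HasFDerivAt.fun_sum fun j _ =>
      HasFDerivAt.const_mul ?_ _) _
    have a := (hfd (cf c i)).comp_hasFDerivAt c (hA i)
    have b := (hfd (cf c j)).comp_hasFDerivAt c (hA j)
    have d := (hfd (cf c i + cf c j)).comp_hasFDerivAt c ((hA i).fun_add (hA j))
    exact (a.fun_add b).fun_sub d
  have hek : e k ≠ l := by
    intro h; rw [← h] at hkl; simp [he] at hkl
  have hce : ∀ j, cf c (e j) = c j := by
    intro j; rw [hcf]; simp [he]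
  have hsum : (l : ℕ) = N - 1 → ∑ m, c m = c k := by
    intro h
    refine Finset.sum_eq_single k (fun b _ hb => hzero b (fun h' => hb (Fin.ext h')) ?_) (by simp)
    have := b.2; omega
  have hsum2 : (l : ℕ) < N - 1 → ∑ m, c m = 1 := by
    intro h
    have hne : k ≠ ⟨l, h⟩ := by
      intro h'; rw [Fin.ext_iff] at h'; simp at h'; omega
    rw [Fintype.sum_eq_add k ⟨l, h⟩ hne, hcl h]
    · ring
    · rintro b ⟨h1, h2⟩
      exact hzero b (fun h' => h1 (Fin.ext h')) (fun h' => h2 (Fin.ext h'))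
  have hCl : cf c l = 1 - cf c (e k) := by
    rw [hce, hcf]
    split_ifs with h
    · exact hcl h
    · rw [hsum (by have := l.2; omega)]
  have hC0 : ∀ i, i ≠ e k → i ≠ l → cf c i = 0 := by
    intro i h1 h2
    rw [hcf]
    split_ifs with h
    · exact hzero _ (fun h' => h1 (Fin.ext h')) (fun h' => h2 (Fin.ext h'))
    · have : (l : ℕ) < N - 1 := by
        by_contra h3
        apply h2; apply Fin.ext; have := l.2; have := i.2; omega
      rw [hsum2 this]; ring
  have hgrad : ∀ j, fderiv ℝ Hhat c (Pi.single j (1 : ℝ))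
      = β / 2 * g (c k) * ((σ (e j) l - σ (e j) (e k)) - (σ z l - σ z (e k))) := by
    intro j
    rw [hHd.fderiv]
    have := stmt11_sym σ hσsymm g (cf c) (fun i => A i (Pi.single j 1))
    simp only [stmt11_eval σ hσsymm hσdiag g hg (cf c) (e k) l hek hCl hC0, hce] at this
    simp only [ContinuousLinearMap.smul_apply, ContinuousLinearMap.sum_apply,
      ContinuousLinearMap.add_apply, ContinuousLinearMap.sub_apply, smul_eq_mul]
    rw [this]
    simp only [hAs, sub_mul, Finset.sum_sub_distrib, ite_mul, one_mul, zero_mul,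
      Finset.sum_ite_eq', Finset.sum_ite_eq, Finset.mem_univ, if_true]
    ring
  let v : Fin (N - 1) → ℝ := fun i => 1 / η ^ 2 * g (c k) *
    ((if i = k then 1 else 0) - (if e i = l then 1 else 0))
  have h2 : Real.sqrt 2 ≠ 0 := by positivity
  have hη0 : η ≠ 0 := hη.ne'
  have hgv : (fun j => fderiv ℝ Hhat c (Pi.single j (1 : ℝ))) = Λ *ᵥ v := by
    funext j
    rw [hgrad]
    have hl' : ∑ i, Λ j i * (if e i = l then (1 : ℝ) else 0)
        = 3 / Real.sqrt 2 * η * (σ (e j) z + σ l z - σ (e j) l) := by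
      by_cases h : (l : ℕ) < N - 1
      · have hel : ∀ i, e i = l ↔ i = ⟨l, h⟩ := by
          intro i; simp [he, Fin.ext_iff]
        simp only [hel, mul_ite, mul_one, mul_zero, Finset.sum_ite_eq', Finset.mem_univ, if_true]
        rw [hΛdef, (hel ⟨l, h⟩).2 rfl]
      · have hlz : l = z := by
          apply Fin.ext; simp only [hz]; have := l.2; omega
        have hel : ∀ i, e i ≠ l := by
          intro i h'; apply h; rw [← h']; simp [he]
        simp only [hel, if_false, mul_zero, Finset.sum_const_zero]
        simp [hlz, hσdiag]
    have hk' : ∑ i, Λ j i * (if i = k then (1 : ℝ) else 0)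
        = 3 / Real.sqrt 2 * η * (σ (e j) z + σ (e k) z - σ (e j) (e k)) := by
      simp [hΛdef]
    have : (Λ *ᵥ v) j = 1 / η ^ 2 * g (c k) *
        (∑ i, Λ j i * (if i = k then (1 : ℝ) else 0)
          - ∑ i, Λ j i * (if e i = l then (1 : ℝ) else 0)) := by
      simp only [Matrix.mulVec, dotProduct, v, ← Finset.sum_sub_distrib, Finset.mul_sum]
      refine Finset.sum_congr rfl fun i _ => ?_
      ring
    rw [this, hl', hk', hβ, hσsymm z l, hσsymm z (e k)]
    field_simp
    ring
  have hLv : ∀ i, L i c = v i := by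
    intro i
    have h1 : L i c = (Θ *ᵥ (fun j => fderiv ℝ Hhat c (Pi.single j (1 : ℝ)))) i := by
      rw [hL]; rfl
    rw [h1, hgv, Matrix.mulVec_mulVec, hΘ, Matrix.nonsing_inv_mul _ hΛinv, Matrix.one_mulVec]
  refine ⟨fun i h1 h2 => ?_, ?_, fun h => ?_⟩
  · have h3 : i ≠ k := fun h => h1 (by rw [h])
    have h4 : e i ≠ l := fun h => h2 (by rw [← h]; simp [he])
    rw [hLv]; simp [v, h3, h4]
  · rw [hLv]; simp [v, hek, hg]
  · have h3 : (⟨l, h⟩ : Fin (N - 1)) ≠ k := by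
      intro h'; rw [Fin.ext_iff] at h'; simp at h'; omega
    have h4 : e ⟨l, h⟩ = l := by simp [he, Fin.ext_iff]
    rw [hLv]; simp [v, h3, h4, hg]
end

section
/- Let N ≥ 3, η > 0, and σ = (σ_{ij}) symmetric with σ_{ij} > 0 for i ≠ j and σ_{ii} = 0. Let t ∈ ℝ^N with t_N = 0, and define ξ_{ij} = (√2/(η·σ_{ij}))·(σ_{iN}·t_i − σ_{jN}·t_j) for i ≠ j and ξ_{ii} = 0. For the removal of phase N, define the (N−1)×(N−1) matrix σ'_{ij} = σ_{ij} (1 ≤ i,j ≤ N−1), and define t' ∈ ℝ^{N−1} by t'_i = (σ_{iN}·t_i − σ_{N−1,N}·t_{N−1})/σ_{i,N−1} for 1 ≤ i ≤ N−2 and t'_{N−1} = 0; let ξ'_{ij} = (√2/(η·σ'_{ij}))·(σ'_{i,N−1}·t'_i − σ'_{j,N−1}·t'_j) for i ≠ j and ξ'_{ii} = 0. Then ξ'_{ij} = ξ_{ij} for all 1 ≤ i,j ≤ N−1. -/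
/-- Removal of phase `N`. With `ξ_{ij} = (√2/(η σ_{ij}))(σ_{iN}t_i − σ_{jN}t_j)`
(`t_N = 0`), `σ'_{ij} = σ_{ij}` and `t'_i = (σ_{iN}t_i − σ_{N−1,N}t_{N−1})/σ_{i,N−1}` for
`i ≤ N−2`, `t'_{N−1} = 0`, the reduced coefficients
`ξ'_{ij} = (√2/(η σ'_{ij}))(σ'_{i,N−1}t'_i − σ'_{j,N−1}t'_j)` satisfy `ξ'_{ij} = ξ_{ij}`
for all `1 ≤ i,j ≤ N−1`. -/
theorem stmt14 (N : ℕ) (hN : 3 ≤ N) (η : ℝ) (hη : 0 < η)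
    (σ : Fin N → Fin N → ℝ)
    (hσsymm : ∀ i j, σ i j = σ j i)
    (hσdiag : ∀ i, σ i i = 0)
    (hσpos : ∀ i j, i ≠ j → 0 < σ i j)
    (t : Fin N → ℝ) (htN : t ⟨N - 1, by omega⟩ = 0)
    (ξ : Fin N → Fin N → ℝ)
    (hξ : ∀ i j, i ≠ j → ξ i j = Real.sqrt 2 / (η * σ i j) *
      (σ i ⟨N - 1, by omega⟩ * t i - σ j ⟨N - 1, by omega⟩ * t j))
    (hξdiag : ∀ i, ξ i i = 0)
    (t' : Fin (N - 1) → ℝ)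
    (ht' : ∀ (i : Fin (N - 1)), (i : ℕ) < N - 2 → t' i =
      (σ (Fin.castLE (N.sub_le 1) i) ⟨N - 1, by omega⟩ * t (Fin.castLE (N.sub_le 1) i)
        - σ ⟨N - 2, by omega⟩ ⟨N - 1, by omega⟩ * t ⟨N - 2, by omega⟩)
      / σ (Fin.castLE (N.sub_le 1) i) ⟨N - 2, by omega⟩)
    (ht'last : t' ⟨N - 2, by omega⟩ = 0)
    (ξ' : Fin (N - 1) → Fin (N - 1) → ℝ)
    (hξ' : ∀ i j : Fin (N - 1), i ≠ j → ξ' i j =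
      Real.sqrt 2 / (η * σ (Fin.castLE (N.sub_le 1) i) (Fin.castLE (N.sub_le 1) j)) *
        (σ (Fin.castLE (N.sub_le 1) i) ⟨N - 2, by omega⟩ * t' i
          - σ (Fin.castLE (N.sub_le 1) j) ⟨N - 2, by omega⟩ * t' j))
    (hξ'diag : ∀ i, ξ' i i = 0) :
    ∀ i j : Fin (N - 1), ξ' i j = ξ (Fin.castLE (N.sub_le 1) i) (Fin.castLE (N.sub_le 1) j) := by
  have key : ∀ i : Fin (N - 1),
      σ (Fin.castLE (N.sub_le 1) i) ⟨N - 2, by omega⟩ * t' i =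
        σ (Fin.castLE (N.sub_le 1) i) ⟨N - 1, by omega⟩ * t (Fin.castLE (N.sub_le 1) i)
        - σ ⟨N - 2, by omega⟩ ⟨N - 1, by omega⟩ * t ⟨N - 2, by omega⟩ := by
    intro i
    by_cases h : (i : ℕ) < N - 2
    · rw [ht' i h]
      have hne : Fin.castLE (N.sub_le 1) i ≠ ⟨N - 2, by omega⟩ := by
        intro e
        have e2 := congrArg Fin.val e
        simp only [Fin.val_castLE] at e2
        omega
      exact mul_div_cancel₀ _ (hσpos _ _ hne).ne'
    · have hi : i = ⟨N - 2, by omega⟩ := by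
        apply Fin.ext
        have := i.isLt
        simp only
        omega
      have hc : Fin.castLE (N.sub_le 1) i = ⟨N - 2, by omega⟩ :=
        Fin.ext (by have e2 := congrArg Fin.val hi; exact e2)
      have h0 : t' i = 0 := by rw [hi]; exact ht'last
      rw [h0, mul_zero, hc]
      exact (sub_self _).symm
  intro i j
  by_cases hij : i = j
  · subst hij
    rw [hξ'diag, hξdiag]
  · have hne : Fin.castLE (N.sub_le 1) i ≠ Fin.castLE (N.sub_le 1) j := by
      intro e
      exact hij (Fin.castLE_injective _ e)
    rw [hξ' i j hij, hξ _ _ hne, key i, key j]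
    ring
end

section
/- Let N ≥ 3, η > 0, and σ = (σ_{ij}) symmetric with σ_{ij} > 0 for i ≠ j and σ_{ii} = 0. Let t ∈ ℝ^N with t_N = 0, and define ξ_{ij} = (√2/(η·σ_{ij}))·(σ_{iN}·t_i − σ_{jN}·t_j) for i ≠ j and ξ_{ii} = 0. Fix k ≤ N−1 and let δ : {1,…,N−1} → {1,…,N} be the increasing bijection onto {1,…,N}∖{k} (so δ(N−1) = N). Define σ'_{ij} = σ_{δ(i)δ(j)}, t'_i = t_{δ(i)}, and ξ'_{ij} = (√2/(η·σ'_{ij}))·(σ'_{i,N−1}·t'_i − σ'_{j,N−1}·t'_j) for i ≠ j, ξ'_{ii} = 0. Then ξ'_{ij} = ξ_{δ(i)δ(j)} for all 1 ≤ i,j ≤ N−1; moreover, for every c ∈ ℝ^N with c_k = 0, setting c'_i = c_{δ(i)}, one has Σ_{j=1}^{N−1} ξ'_{ij}·c'_i·c'_j = Σ_{j=1}^{N} ξ_{δ(i)j}·c_{δ(i)}·c_j for each 1 ≤ i ≤ N−1, and Σ_{j=1}^{N} ξ_{kj}·c_k·c_j = 0. (The N-phase contact-angle boundary condition reduces to the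 (N−1)-phase one when fluid k, k ≤ N−1, is absent.) -/
/-- Removal of phase `k ≤ N−1`. With `δ` the increasing bijection of
`{1,…,N−1}` onto `{1,…,N}∖{k}` (so `δ(N−1) = N`), `σ'_{ij} = σ_{δ(i)δ(j)}`,
`t'_i = t_{δ(i)}`, and `ξ'` built from `σ', t'` as `ξ` is built from `σ, t`, one has
`ξ'_{ij} = ξ_{δ(i)δ(j)}`; moreover for every `c` with `c_k = 0`, the reduced boundary
sums agree with the original ones, and `Σ_j ξ_{kj} c_k c_j = 0`. -/
theorem stmt15 (N : ℕ) (hN : 3 ≤ N) (η : ℝ) (hη : 0 < η)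
    (σ : Fin N → Fin N → ℝ)
    (hσsymm : ∀ i j, σ i j = σ j i)
    (hσdiag : ∀ i, σ i i = 0)
    (hσpos : ∀ i j, i ≠ j → 0 < σ i j)
    (t : Fin N → ℝ) (htN : t ⟨N - 1, by omega⟩ = 0)
    (ξ : Fin N → Fin N → ℝ)
    (hξ : ∀ i j, i ≠ j → ξ i j = Real.sqrt 2 / (η * σ i j) *
      (σ i ⟨N - 1, by omega⟩ * t i - σ j ⟨N - 1, by omega⟩ * t j))
    (hξdiag : ∀ i, ξ i i = 0)
    (k : Fin N) (hk : (k : ℕ) < N - 1)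
    (δ : Fin (N - 1) → Fin N) (hδmono : StrictMono δ) (hδrange : Set.range δ = {k}ᶜ)
    (t' : Fin (N - 1) → ℝ) (ht' : ∀ i, t' i = t (δ i))
    (ξ' : Fin (N - 1) → Fin (N - 1) → ℝ)
    (hξ' : ∀ i j : Fin (N - 1), i ≠ j → ξ' i j =
      Real.sqrt 2 / (η * σ (δ i) (δ j)) *
        (σ (δ i) (δ ⟨N - 2, by omega⟩) * t' i - σ (δ j) (δ ⟨N - 2, by omega⟩) * t' j))
    (hξ'diag : ∀ i, ξ' i i = 0) :
    (∀ i j : Fin (N - 1), ξ' i j = ξ (δ i) (δ j))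
    ∧ ∀ c : Fin N → ℝ, c k = 0 →
        (∀ i : Fin (N - 1),
          ∑ j : Fin (N - 1), ξ' i j * c (δ i) * c (δ j)
            = ∑ j : Fin N, ξ (δ i) j * c (δ i) * c j)
        ∧ ∑ j : Fin N, ξ k j * c k * c j = 0 := by
  have hlast : δ ⟨N - 2, by omega⟩ = ⟨N - 1, by omega⟩ := by
    have hm : (⟨N - 1, by omega⟩ : Fin N) ∈ Set.range δ := by
      rw [hδrange]
      intro h
      have h2 : (⟨N - 1, by omega⟩ : Fin N) = k := h
      have h3 := congrArg Fin.val h2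
      simp only at h3
      omega
    obtain ⟨m, hm⟩ := hm
    have hle : m ≤ ⟨N - 2, by omega⟩ := by
      rw [Fin.le_def]
      have := m.isLt
      simp only
      omega
    have h1 := hδmono.monotone hle
    rw [hm, Fin.le_def] at h1
    have h2 := (δ ⟨N - 2, by omega⟩).isLt
    apply Fin.ext
    simp only at h1 ⊢
    omega
  have key : ∀ i j : Fin (N - 1), ξ' i j = ξ (δ i) (δ j) := by
    intro i j
    by_cases hij : i = j
    · subst hij
      rw [hξ'diag, hξdiag]
    · rw [hξ' i j hij, hξ _ _ (fun h => hij (hδmono.injective h)), hlast, ht', ht']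
  refine ⟨key, fun c hc => ⟨fun i => ?_, ?_⟩⟩
  · simp only [key]
    refine Fintype.sum_of_injective δ hδmono.injective _ _ ?_ (fun _ => rfl)
    intro j hj
    rw [hδrange] at hj
    have hjk : j = k := by simpa using hj
    rw [hjk, hc, mul_zero]
  · simp [hc]
end

section
/- Let N ≥ 3, η > 0, and σ = (σ_{ij}) symmetric with σ_{ij} > 0 for i ≠ j and σ_{ii} = 0. Let t ∈ ℝ^N with t_N = 0 and define ξ_{ij} = (√2/(η·σ_{ij}))·(σ_{iN}·t_i − σ_{jN}·t_j) for i ≠ j, ξ_{ii} = 0. Define the (N−1)-phase coefficients ξ' as in the removal of phase N (σ'_{ij} = σ_{ij}, t'_i = (σ_{iN}t_i − σ_{N−1,N}t_{N−1})/σ_{i,N−1} for i ≤ N−2, t'_{N−1} = 0). Then for every c ∈ ℝ^N with c_N = 0, writing c' = (c_1,…,c_{N−1}), one has Σ_{j=1}^{N−1} ξ'_{ij}·c'_i·c'_j = Σ_{j=1}^{N} ξ_{ij}·c_i·c_j for each 1 ≤ i ≤ N−1, and Σ_{j=1}^{N} ξ_{Nj}·c_N·c_j = 0. (The N-phase contact-angle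 boundary condition reduces to the (N−1)-phase one when fluid N is absent.) -/
/-- Removal of phase `N`. With `ξ` built from `σ, t` (`t_N = 0`) and the
reduced coefficients `ξ'` built from `σ'_{ij} = σ_{ij}`,
`t'_i = (σ_{iN}t_i − σ_{N−1,N}t_{N−1})/σ_{i,N−1}` for `i ≤ N−2`, `t'_{N−1} = 0`:
for every `c` with `c_N = 0`, `Σ_{j=1}^{N−1} ξ'_{ij} c_i c_j = Σ_{j=1}^{N} ξ_{ij} c_i c_j`
for each `i ≤ N−1`, and `Σ_{j=1}^{N} ξ_{Nj} c_N c_j = 0`. -/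
theorem stmt16 (N : ℕ) (hN : 3 ≤ N) (η : ℝ) (hη : 0 < η)
    (σ : Fin N → Fin N → ℝ)
    (hσsymm : ∀ i j, σ i j = σ j i)
    (hσdiag : ∀ i, σ i i = 0)
    (hσpos : ∀ i j, i ≠ j → 0 < σ i j)
    (t : Fin N → ℝ) (htN : t ⟨N - 1, by omega⟩ = 0)
    (ξ : Fin N → Fin N → ℝ)
    (hξ : ∀ i j, i ≠ j → ξ i j = Real.sqrt 2 / (η * σ i j) *
      (σ i ⟨N - 1, by omega⟩ * t i - σ j ⟨N - 1, by omega⟩ * t j))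
    (hξdiag : ∀ i, ξ i i = 0)
    (t' : Fin (N - 1) → ℝ)
    (ht' : ∀ (i : Fin (N - 1)), (i : ℕ) < N - 2 → t' i =
      (σ (Fin.castLE (N.sub_le 1) i) ⟨N - 1, by omega⟩ * t (Fin.castLE (N.sub_le 1) i)
        - σ ⟨N - 2, by omega⟩ ⟨N - 1, by omega⟩ * t ⟨N - 2, by omega⟩)
      / σ (Fin.castLE (N.sub_le 1) i) ⟨N - 2, by omega⟩)
    (ht'last : t' ⟨N - 2, by omega⟩ = 0)
    (ξ' : Fin (N - 1) → Fin (N - 1) → ℝ)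
    (hξ' : ∀ i j : Fin (N - 1), i ≠ j → ξ' i j =
      Real.sqrt 2 / (η * σ (Fin.castLE (N.sub_le 1) i) (Fin.castLE (N.sub_le 1) j)) *
        (σ (Fin.castLE (N.sub_le 1) i) ⟨N - 2, by omega⟩ * t' i
          - σ (Fin.castLE (N.sub_le 1) j) ⟨N - 2, by omega⟩ * t' j))
    (hξ'diag : ∀ i, ξ' i i = 0) :
    ∀ c : Fin N → ℝ, c ⟨N - 1, by omega⟩ = 0 →
      (∀ i : Fin (N - 1),
        ∑ j : Fin (N - 1), ξ' i j * c (Fin.castLE (N.sub_le 1) i) * c (Fin.castLE (N.sub_le 1) j)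
          = ∑ j : Fin N, ξ (Fin.castLE (N.sub_le 1) i) j * c (Fin.castLE (N.sub_le 1) i) * c j)
      ∧ ∑ j : Fin N, ξ ⟨N - 1, by omega⟩ j * c ⟨N - 1, by omega⟩ * c j = 0 := by
  intro c hc
  have key : ∀ i : Fin (N - 1), σ (Fin.castLE (N.sub_le 1) i) ⟨N - 2, by omega⟩ * t' i =
      σ (Fin.castLE (N.sub_le 1) i) ⟨N - 1, by omega⟩ * t (Fin.castLE (N.sub_le 1) i)
        - σ ⟨N - 2, by omega⟩ ⟨N - 1, by omega⟩ * t ⟨N - 2, by omega⟩ := by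
    intro i
    by_cases h : (i : ℕ) < N - 2
    · have hne : Fin.castLE (N.sub_le 1) i ≠ ⟨N - 2, by omega⟩ := by
        intro h'
        have := congrArg Fin.val h'
        simp at this
        omega
      have hp := (hσpos _ _ hne).ne'
      rw [ht' i h, mul_div_cancel₀ _ hp]
    · have hi : i = ⟨N - 2, by omega⟩ := by
        apply Fin.ext
        have := i.isLt
        simp only
        omega
      rw [hi, ht'last]
      simp
  have hxi : ∀ i j : Fin (N - 1),
      ξ' i j = ξ (Fin.castLE (N.sub_le 1) i) (Fin.castLE (N.sub_le 1) j) := by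
    intro i j
    by_cases h : i = j
    · subst h
      rw [hξ'diag, hξdiag]
    · have hne : Fin.castLE (N.sub_le 1) i ≠ Fin.castLE (N.sub_le 1) j := by
        intro h'
        exact h (Fin.castLE_injective _ h')
      rw [hξ' i j h, hξ _ _ hne, key i, key j]
      ring
  refine ⟨fun i => ?_, by simp [hc]⟩
  have hsum : ∀ f : Fin N → ℝ, f ⟨N - 1, by omega⟩ = 0 →
      ∑ j : Fin (N - 1), f (Fin.castLE (N.sub_le 1) j) = ∑ j : Fin N, f j := by
    clear * - hN
    intro f hf
    obtain ⟨M, rfl⟩ : ∃ M, N = M + 1 := ⟨N - 1, by omega⟩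
    rw [Fin.sum_univ_castSucc f]
    have : f (Fin.last M) = 0 := hf
    rw [this, add_zero]
    rfl
  rw [← hsum _ (by rw [hc, mul_zero])]
  exact Finset.sum_congr rfl fun j _ => by rw [hxi]
end
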